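/- Let K be an infinite field and 𝕏 ⊆ ℙ^n_K a 0-dimensional locally Gorenstein scheme. Then: (a) if r_𝕏 = 1, then 𝕏 is an almost Gorenstein level scheme; (b) if r_𝕏 = 1 and deg(𝕏) > 2, then 𝕏 has minimal Dedekind different; (c) if 𝕏 is level and min{Δ_𝕏, r_𝕏} ≥ 2, then 𝕏 is not an almost Gorenstein scheme. -/

import Mathlib

noncomputable section

/-! An algebraic model for a 0-dimensional subscheme `𝕏 ⊆ ℙⁿ_K` whose support avoids
the hyperplane `Z(X₀)`.  The scheme is recorded through the local rings
`𝒪_{𝕏,p_j}` at the points `p_1, …, p_s` of its support, together with the germ map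
sending a homogeneous polynomial `F` of degree `i` to the tuple of germs
`(F_{p_1}, …, F_{p_s})`; this is the degree-`i` component of the injection
`ĩ : R → Q^h(R) ≅ ∏_j 𝒪_{𝕏,p_j}[T_j, T_j⁻¹]`, where every graded component of
`Q^h(R)` is identified with `Γ = ∏_j 𝒪_{𝕏,p_j}` by dropping the powers of the `T_j`.
Since `x₀` has germ `1` at every point, the homogeneous coordinate ring
`R = P/I_𝕏` is faithfully encoded by the chain of subspaces
`R_i ≅ V_i = germ(P_i) ⊆ Γ` (with `V_i ⊆ V_{i+1}`, and `V_i = Γ` for `i ≫ 0`). -/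

/-- The data of one (fat) point of a 0-dimensional scheme: a finite local `K`-algebra. -/
structure PointData (K : Type) [Field K] : Type 1 where
  carrier : Type
  [ring : CommRing carrier]
  [alg : Algebra K carrier]
  [loc : IsLocalRing carrier]
  [findim : FiniteDimensional K carrier]

attribute [instance] PointData.ring PointData.alg PointData.loc PointData.findim

/-- A model of a 0-dimensional subscheme of `ℙⁿ_K`, no point of whose support lies
on `Z(X₀)` (coordinates being chosen so that each point has `X₀`-coordinate 1, the
germ of `x₀` at every point is `1`). -/
structure ZeroDimScheme (K : Type) [Field K] (n : ℕ) : Type 1 where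
  /-- the number of points in the support -/
  s : ℕ
  spos : 0 < s
  /-- the local rings `𝒪_{𝕏,p_j}` -/
  pt : Fin s → PointData K
  /-- the germ map: for `F` homogeneous of degree `i` this is the degree-`i`
  component of `ĩ : R → Q^h(R)`, i.e. `F ↦ (F_{p_1}, …, F_{p_s})` -/
  germ : MvPolynomial (Fin (n + 1)) K →ₐ[K] ∀ j, (pt j).carrier
  /-- the germ of `X₀` at each point is `1` -/
  germ_X0 : germ (MvPolynomial.X 0) = 1
  /-- in all large degrees, the germ map is surjective onto `∏_j 𝒪_{𝕏,p_j}`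
  (this characterizes `I_𝕏` as the full homogeneous vanishing ideal of the scheme) -/
  eventually_surj : ∃ N : ℕ, ∀ i, N ≤ i →
    Submodule.map germ.toLinearMap
      (MvPolynomial.homogeneousSubmodule (Fin (n + 1)) K i) = ⊤

namespace ZeroDimScheme

variable {K : Type} [Field K] {n : ℕ}

/-- `Γ = ∏_j 𝒪_{𝕏,p_j}`, the common model for every graded component of `Q^h(R)`. -/
abbrev Gamma (S : ZeroDimScheme K n) : Type := ∀ j, (S.pt j).carrier

variable (S : ZeroDimScheme K n)

/-- `V i ⊆ Γ` is the image of the degree-`i` component `R_i` of the homogeneous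
coordinate ring `R` under (the degree-`i` component of) `ĩ`; we identify `R_i ≅ V i`. -/
def V (i : ℕ) : Submodule K S.Gamma :=
  Submodule.map S.germ.toLinearMap
    (MvPolynomial.homogeneousSubmodule (Fin (n + 1)) K i)

/-- `R_i` for `i : ℤ` (zero in negative degrees). -/
def Vz (i : ℤ) : Submodule K S.Gamma := if 0 ≤ i then S.V i.toNat else ⊥

/-- `deg 𝕏 = Σ_j dim_K 𝒪_{𝕏,p_j}`. -/
def degX : ℕ := Module.finrank K S.Gamma

/-- The Hilbert function `HF_𝕏(i) = dim_K R_i`. -/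
def HF (i : ℕ) : ℕ := Module.finrank K (S.V i)

/-- The Hilbert function on `ℤ`. -/
def HFz (i : ℤ) : ℕ := Module.finrank K (S.Vz i)

/-- The regularity index `r_𝕏`: the least `r` with `HF_𝕏(i) = deg 𝕏` for all `i ≥ r`. -/
def rX : ℕ := sInf {r : ℕ | ∀ i, r ≤ i → S.HF i = S.degX}

/-- `κ_j = dim_K κ(p_j)`, the residue field of `𝕏` at `p_j`. -/
def kappa (j : Fin S.s) : ℕ :=
  Module.finrank K
    ((S.pt j).carrier ⧸
      Submodule.restrictScalars K (IsLocalRing.maximalIdeal (S.pt j).carrier))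

/-- `sj` is a socle element of `𝒪_{𝕏,p_j}`, i.e. `sj ∈ Ann(𝔪_{𝕏,p_j})`.  By
Proposition 1.2, the maximal `p_j`-subschemes `𝕐 ⊆ 𝕏` correspond 1-1 to the ideals
of `Γ` generated by `(0,…,0,sj,0,…,0)` with `sj` a *nonzero* socle element. -/
def IsSocle (j : Fin S.s) (sj : (S.pt j).carrier) : Prop :=
  ∀ b ∈ IsLocalRing.maximalIdeal (S.pt j).carrier, sj * b = 0

/-- The ideal `U = ⟨(0,…,0,sj,0,…,0)⟩` of `Γ` corresponding to the maximal
`p_j`-subscheme `𝕐` determined by the socle element `sj`; one has `I_{𝕐/𝕏} = ĩ⁻¹(U)`. -/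
def sepIdeal (j : Fin S.s) (sj : (S.pt j).carrier) : Submodule K S.Gamma :=
  Submodule.restrictScalars K (Ideal.span {(Pi.single j sj : S.Gamma)})

/-- The degree-`i` component `(I_{𝕐/𝕏})_i = R_i ∩ ĩ⁻¹(U)` of the ideal of the maximal
`p_j`-subscheme `𝕐` (given by the socle element `sj`) in `R`. -/
def IY (j : Fin S.s) (sj : (S.pt j).carrier) (i : ℕ) : Submodule K S.Gamma :=
  S.V i ⊓ S.sepIdeal j sj

/-- `(I_{𝕐/𝕏})_i` for `i : ℤ`. -/
def IYz (j : Fin S.s) (sj : (S.pt j).carrier) (i : ℤ) : Submodule K S.Gamma :=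
  S.Vz i ⊓ S.sepIdeal j sj

/-- The Hilbert function `HF_𝕐(i) = HF_𝕏(i) - dim_K (I_{𝕐/𝕏})_i` of the maximal
`p_j`-subscheme `𝕐` given by the socle element `sj`. -/
def HFY (j : Fin S.s) (sj : (S.pt j).carrier) (i : ℕ) : ℕ :=
  S.HF i - Module.finrank K (S.IY j sj i)

/-- `HF_𝕐` on `ℤ`. -/
def HFYz (j : Fin S.s) (sj : (S.pt j).carrier) (i : ℤ) : ℕ :=
  S.HFz i - Module.finrank K (S.IYz j sj i)

/-- `α_{𝕐/𝕏} = min {i | (I_{𝕐/𝕏})_i ≠ 0}`. -/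
def alphaY (j : Fin S.s) (sj : (S.pt j).carrier) : ℕ :=
  sInf {i : ℕ | S.IY j sj i ≠ ⊥}

/-- `μ(a) = min {i | (0,…,0,a T_j^i,0,…,0) ∈ ĩ(R)}` for `a ∈ 𝒪_{𝕏,p_j}`. -/
def mu (j : Fin S.s) (a : (S.pt j).carrier) : ℕ :=
  sInf {i : ℕ | (Pi.single j a : S.Gamma) ∈ S.V i}

/-- `μ_{𝕐/𝕏}`, the maximal degree of a minimal separator of the maximal
`p_j`-subscheme `𝕐` given by the socle element `sj`; independently of all choices it
equals `max {μ(a·sj) | a ∈ 𝒪_{𝕏,p_j}, a·sj ≠ 0}`. -/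
def muY (j : Fin S.s) (sj : (S.pt j).carrier) : ℕ :=
  sSup {m : ℕ | ∃ a : (S.pt j).carrier, a * sj ≠ 0 ∧ m = S.mu j (a * sj)}

/-- `deg_𝕏(p_j) = min {μ_{𝕐/𝕏} | 𝕐 a maximal p_j-subscheme of 𝕏}`. -/
def degP (j : Fin S.s) : ℕ :=
  sInf {m : ℕ | ∃ sj : (S.pt j).carrier, S.IsSocle j sj ∧ sj ≠ 0 ∧ m = S.muY j sj}

/-- `𝕏` has the Cayley–Bacharach property of degree `d`: `deg_𝕏(p_j) ≥ d + 1` for all `j`. -/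
def CBP (d : ℕ) : Prop := ∀ j : Fin S.s, d + 1 ≤ S.degP j

/-- `𝕏` is a Cayley–Bacharach scheme: it has `CBP(r_𝕏 - 1)`. -/
def CayleyBacharach : Prop := S.CBP (S.rX - 1)

/-- The residue class map `𝒪_{𝕏,p_j} → κ(p_j)` as a `K`-linear map. -/
def resQ (j : Fin S.s) :
    (S.pt j).carrier →ₗ[K]
      ((S.pt j).carrier ⧸
        Submodule.restrictScalars K (IsLocalRing.maximalIdeal (S.pt j).carrier)) :=
  (Submodule.restrictScalars K (IsLocalRing.maximalIdeal (S.pt j).carrier)).mkQ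

/-- The residue classes of `e 0, …, e (κ_j - 1)` form a `K`-basis of `κ(p_j)`. -/
def IsResidueBasis (j : Fin S.s) {m : ℕ} (e : Fin m → (S.pt j).carrier) : Prop :=
  LinearIndependent K (fun k => S.resQ j (e k)) ∧
    Submodule.span K (Set.range fun k => S.resQ j (e k)) = ⊤

/-- A family `τ_j : 𝒪_{𝕏,p_j} → K` of trace maps: each `τ_j` is a generator of
`Hom_K(𝒪_{𝕏,p_j}, K)` as an `𝒪_{𝕏,p_j}`-module.  Such a family exists iff `𝕏` is
locally Gorenstein, and it induces a homogeneous trace map `σ` of degree zero of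
`Q^h(R)/L₀` (componentwise). -/
def IsTraceFamily (τ : ∀ j, (S.pt j).carrier →ₗ[K] K) : Prop :=
  ∀ j, Function.Bijective
    (fun a : (S.pt j).carrier => (τ j).comp (LinearMap.mulRight K a))

/-- The total trace `Γ → K`, `y ↦ Σ_j τ_j (y_j)`; on the degree-`i` component of
`Q^h(R)` the trace map `σ` is `q ↦ (Ttot τ q)·x₀^i`. -/
def Ttot (τ : ∀ j, (S.pt j).carrier →ₗ[K] K) : S.Gamma →ₗ[K] K :=
  ∑ j : Fin S.s, (τ j).comp (LinearMap.proj j)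

/-- The degree-`k` component `(𝔠^σ_𝕏)_k ⊆ Q^h(R)_k ≅ Γ` of the Dedekind complementary
module: `g ∈ (𝔠^σ_𝕏)_k` iff `σ(g · R) ⊆ K[x₀]`, i.e. `Ttot τ (g·x) = 0` whenever
`x ∈ R_i` with `k + i < 0`. -/
def Cmod (τ : ∀ j, (S.pt j).carrier →ₗ[K] K) (k : ℤ) : Submodule K S.Gamma :=
  ⨅ (i : ℕ) (_ : k + (i : ℤ) < 0) (x : S.Gamma) (_ : x ∈ S.V i),
    LinearMap.ker ((S.Ttot τ).comp (LinearMap.mulRight K x))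

/-- The degree-`i` component `(δ^σ_𝕏)_i ⊆ Q^h(R)_i ≅ Γ` of the Dedekind different
`δ^σ_𝕏 = {f ∈ Q^h(R) | f · 𝔠^σ_𝕏 ⊆ R}`. -/
def delta (τ : ∀ j, (S.pt j).carrier →ₗ[K] K) (i : ℤ) : Submodule K S.Gamma :=
  ⨅ (k : ℤ) (g : S.Gamma) (_ : g ∈ S.Cmod τ k),
    Submodule.comap (LinearMap.mulRight K g) (S.Vz (i + k))

/-- The Hilbert function of the Dedekind different. -/
def HFdelta (τ : ∀ j, (S.pt j).carrier →ₗ[K] K) (i : ℤ) : ℕ :=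
  Module.finrank K (S.delta τ i)

/-- `𝕏` has minimal Dedekind different: `δ^σ_𝕏 = ⊕_{i ≥ 2 r_𝕏} R_i`
(recall `R_i ≅ Γ` for `i ≥ r_𝕏`). -/
def MinimalDedekind (τ : ∀ j, (S.pt j).carrier →ₗ[K] K) : Prop :=
  ∀ i : ℤ, S.delta τ i = if 2 * (S.rX : ℤ) ≤ i then ⊤ else ⊥

/-- The degree-`i` component (`i ≥ 0`) of the conductor
`𝔉_{R̃/R} = {f ∈ R̃ | f·R̃ ⊆ R}` of `R` in `R̃ = ∏_j 𝒪_{𝕏,p_j}[T_j]`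
(whose degree-`i` component is all of `Γ` for every `i ≥ 0`). -/
def cond (i : ℕ) : Submodule K S.Gamma :=
  ⨅ y : S.Gamma, Submodule.comap (LinearMap.mulRight K y) (S.V i)

/-- The conductor on `ℤ` (zero in negative degrees, where `R̃` vanishes). -/
def condZ (i : ℤ) : Submodule K S.Gamma := if 0 ≤ i then S.cond i.toNat else ⊥

/-- The degree-`i` component of the trace `tr(𝔠^σ_𝕏) = δ^σ_𝕏 · 𝔠^σ_𝕏` of the
Dedekind complementary module. -/
def trC (τ : ∀ j, (S.pt j).carrier →ₗ[K] K) (i : ℤ) : Submodule K S.Gamma :=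
  ⨆ (a : ℤ) (b : ℤ) (_ : a + b = i), S.delta τ a * S.Cmod τ b

/-- `𝕏` is nearly Gorenstein: `𝔪 ⊆ tr(𝔠^σ_𝕏)`. -/
def NearlyGorenstein (τ : ∀ j, (S.pt j).carrier →ₗ[K] K) : Prop :=
  ∀ i : ℤ, 1 ≤ i → S.Vz i ≤ S.trC τ i

/-- `𝕏` is almost Gorenstein: there is an exact sequence of graded `R`-modules
`0 → R → 𝔠^σ_𝕏(-r_𝕏) → C → 0` with `𝔪·C = 0`.  A degree-zero graded injection
`R → 𝔠^σ_𝕏(-r_𝕏)` is multiplication by an element `g ∈ (𝔠^σ_𝕏)_{-r_𝕏}` with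
`Ann_R(g) = 0`, and `𝔪·C = 0` means `𝔪 · 𝔠^σ_𝕏(-r_𝕏) ⊆ g·R`. -/
def AlmostGorenstein (τ : ∀ j, (S.pt j).carrier →ₗ[K] K) : Prop :=
  ∃ g ∈ S.Cmod τ (-(S.rX : ℤ)),
    (∀ i : ℕ, ∀ x ∈ S.V i, x * g = 0 → x = 0) ∧
    (∀ a : ℕ, 1 ≤ a → ∀ x ∈ S.V a, ∀ k : ℤ, ∀ h ∈ S.Cmod τ k,
      x * h ∈ Submodule.map (LinearMap.mulRight K g) (S.Vz ((a : ℤ) + k + (S.rX : ℤ))))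

/-- `𝕏` is arithmetically Gorenstein, i.e. `R` is a Gorenstein ring; equivalently the
canonical module is free of rank one: `𝔠^σ_𝕏 = g·R` for some `g ∈ (𝔠^σ_𝕏)_{-r_𝕏}`. -/
def ArithGorenstein (τ : ∀ j, (S.pt j).carrier →ₗ[K] K) : Prop :=
  ∃ g ∈ S.Cmod τ (-(S.rX : ℤ)),
    ∀ k : ℤ, S.Cmod τ k = Submodule.map (LinearMap.mulRight K g) (S.Vz (k + (S.rX : ℤ)))

/-- `𝕏` is level: the socle of `R̄ = R/⟨x₀⟩` equals `R̄_{r_𝕏}`, i.e. no nonzero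
homogeneous element of `R̄` of degree `< r_𝕏` is annihilated by `𝔪̄` (recall
`R̄_i ≅ V i / V (i-1)` and `x₀`-multiplication preserves germs). -/
def Level : Prop :=
  ∀ i : ℕ, i < S.rX → ∀ x ∈ S.V i,
    (∀ a : ℕ, 1 ≤ a → ∀ y ∈ S.V a, x * y ∈ S.Vz ((i : ℤ) + (a : ℤ) - 1)) →
      x ∈ S.Vz ((i : ℤ) - 1)

/-- The subspace `{x ∈ Γ | x_k = 0 for k ≠ j}` of `Γ`: the degreewise model for the
ideal of the subscheme `𝕐_j ⊆ 𝕏` with `I_{𝕐_j} = ∩_{k ≠ j} I_k`. -/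
def Wj (j : Fin S.s) : Submodule K S.Gamma :=
  ⨅ (k : Fin S.s) (_ : k ≠ j),
    LinearMap.ker (LinearMap.proj k : S.Gamma →ₗ[K] (S.pt k).carrier)

/-- `(I_{𝕐_j/𝕏})_i` for the subscheme `𝕐_j` complementary to `p_j`. -/
def IW (j : Fin S.s) (i : ℕ) : Submodule K S.Gamma := S.V i ⊓ S.Wj j

/-- The Hilbert function of the subscheme `𝕐_j` complementary to `p_j`. -/
def HFW (j : Fin S.s) (i : ℕ) : ℕ := S.HF i - Module.finrank K (S.IW j i)

/-- `α_{𝕐_j/𝕏}` for the subscheme `𝕐_j` complementary to `p_j`. -/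
def alphaW (j : Fin S.s) : ℕ := sInf {i : ℕ | S.IW j i ≠ ⊥}

/-- The subspace `{x ∈ Γ | x_k = 0 for k ∉ {j₁, j₂}}` of `Γ`: the degreewise model for
the ideal in `R` of the subscheme of the reduced scheme `𝕏` complementary to `{p_{j₁}, p_{j₂}}`. -/
def Wpair (j1 j2 : Fin S.s) : Submodule K S.Gamma :=
  ⨅ (k : Fin S.s) (_ : k ≠ j1) (_ : k ≠ j2),
    LinearMap.ker (LinearMap.proj k : S.Gamma →ₗ[K] (S.pt k).carrier)

/-- The homogeneous vanishing ideal `I_𝕏 ⊆ P`. -/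
def IX : Ideal (MvPolynomial (Fin (n + 1)) K) :=
  Ideal.span {F | (∃ i : ℕ, F ∈ MvPolynomial.homogeneousSubmodule (Fin (n + 1)) K i) ∧
    S.germ F = 0}

/-- The `n×n`-minor (Jacobian determinant with respect to `X_1, …, X_n`) of an
`n`-tuple of polynomials. -/
def jacMinor (Fs : Fin n → MvPolynomial (Fin (n + 1)) K) : MvPolynomial (Fin (n + 1)) K :=
  Matrix.det (Matrix.of fun a b : Fin n => MvPolynomial.pderiv (Fin.succ b) (Fs a))

/-- The preimage in `P` of the Kähler different `ϑ_𝕏 ⊆ R`: the ideal generated by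
`I_𝕏` together with all `n×n` minors of the Jacobian matrix of elements of `I_𝕏`. -/
def KaehlerIdeal : Ideal (MvPolynomial (Fin (n + 1)) K) :=
  S.IX ⊔ Ideal.span {m | ∃ Fs : Fin n → MvPolynomial (Fin (n + 1)) K,
    (∀ a, Fs a ∈ S.IX) ∧ m = jacMinor Fs}

/-- The degree-`i` component of the Kähler different `ϑ_𝕏 ⊆ R`, viewed inside `Γ`. -/
def thetaPiece (i : ℕ) : Submodule K S.Gamma :=
  Submodule.map S.germ.toLinearMap
    (Submodule.restrictScalars K S.KaehlerIdeal ⊓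
      MvPolynomial.homogeneousSubmodule (Fin (n + 1)) K i)

end ZeroDimScheme

end

/-!
No nonzero ideal of `Γ` lies in the hyperplane `H` of elements of trace zero, because the pairing
`(x, y) ↦ σ (x y)` is nondegenerate; hence a proper ideal containing `H` vanishes, and then
`dim Γ ≤ 1`.  If `r_𝕏 = 1`, then `R_0 = K`, `R_i = Γ` for `i ≥ 1`, and `𝔠_{-1} = H`.

* Over an infinite field, `H` is not the union of its intersections with the finitely many maximal
  ideals of `Γ`, so it contains a unit, which generates `𝔠` up to a module killed by `𝔪`.
* A nonzero `f ∈ δ_i` with `i ≤ 1` satisfies `f H ⊆ K`.  Here `f H ≠ 0`, as the annihilator of `f`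
  is a proper ideal.  So `f` is a unit, `H` is a line, and `deg 𝕏 ≤ 2`.
* If `𝔪 𝔠(-r_𝕏) ⊆ g R`, every element of `𝔠_{-r_𝕏}` has the form `x g` with `x 𝔪 ⊆ 𝔪`.  For a level
  scheme with `r_𝕏 ≥ 2` this forces `x ∈ K`, whereas `dim 𝔠_{-r_𝕏} ≥ Δ_𝕏 ≥ 2` by duality.
-/

section mulForm

variable {R A : Type*} [CommSemiring R] [CommSemiring A] [Algebra R A]

/-- The symmetric bilinear form `(x, y) ↦ T (x * y)` attached to a linear functional `T` on a
commutative algebra; `T` is treated as a trace map when this form is nondegenerate. -/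
def mulForm (T : A →ₗ[R] R) : LinearMap.BilinForm R A := (LinearMap.mul R A).compr₂ T

variable {T : A →ₗ[R] R}

theorem mulForm_apply (x y : A) : mulForm T x y = T (x * y) := rfl

theorem mulForm_isSymm : (mulForm T).IsSymm := ⟨fun x y => by simp [mulForm_apply, mul_comm]⟩

theorem mem_orthogonal_mulForm_iff {W : Submodule R A} {g : A} :
    g ∈ (mulForm T).orthogonal W ↔ ∀ x ∈ W, T (g * x) = 0 := by
  simp only [LinearMap.BilinForm.mem_orthogonal_iff, mulForm_apply, mul_comm]

theorem orthogonal_mulForm_one : (mulForm T).orthogonal 1 = LinearMap.ker T := by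
  ext g
  rw [mem_orthogonal_mulForm_iff, LinearMap.mem_ker]
  refine ⟨fun h => by simpa using h 1 (Submodule.one_le.1 le_rfl), fun h x hx => ?_⟩
  obtain ⟨c, rfl⟩ := Submodule.mem_one.1 hx
  rw [mul_comm, ← Algebra.smul_def, map_smul, h, smul_zero]

theorem ideal_eq_bot_of_le_ker (hT : (mulForm T).Nondegenerate) {I : Ideal A}
    (hI : I.restrictScalars R ≤ LinearMap.ker T) : I = ⊥ :=
  (Submodule.eq_bot_iff I).2 fun x hx => hT.1 x fun y => hI (I.mul_mem_right y hx)

end mulForm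

section Field

theorem finrank_span_singleton_le_one {K M : Type*} [Field K] [AddCommGroup M] [Module K M]
    (v : M) : Module.finrank K (K ∙ v) ≤ 1 := by
  simpa using finrank_span_le_card (R := K) ({v} : Set M)

variable {K A : Type*} [Field K] [CommRing A] [Algebra K A] {T : A →ₗ[K] K}

theorem mulForm_nondegenerate_iff :
    (mulForm T).Nondegenerate ↔ ∀ x, (∀ y, T (x * y) = 0) → x = 0 :=
  LinearMap.IsRefl.nondegenerate_iff_separatingLeft (B := mulForm T) mulForm_isSymm.isRefl

theorem finrank_le_finrank_add_finrank_orthogonal_mulForm [FiniteDimensional K A]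
    (W : Submodule K A) :
    Module.finrank K A ≤ Module.finrank K W + Module.finrank K ((mulForm T).orthogonal W) := by
  rw [LinearMap.BilinForm.finrank_add_finrank_orthogonal mulForm_isSymm.isRefl]
  exact Nat.le_add_right _ _

theorem finrank_le_one_of_ker_le_ideal (hT : (mulForm T).Nondegenerate) {I : Ideal A}
    (hI : I ≠ ⊤) (hker : LinearMap.ker T ≤ I.restrictScalars K) : Module.finrank K A ≤ 1 := by
  have hIK : I.restrictScalars K ≠ ⊤ := by simpa using hI
  have hT0 : T ≠ 0 := by
    rintro rfl
    exact hIK (top_le_iff.1 (LinearMap.ker_zero.ge.trans hker))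
  have hI_eq : I.restrictScalars K = LinearMap.ker T :=
    ((LinearMap.isCoatom_ker_of_surjective (LinearMap.surjective hT0)).le_iff_eq hIK).1 hker
  have hbot : I = ⊥ := ideal_eq_bot_of_le_ker hT hI_eq.le
  have hinj : Function.Injective T := by
    rw [← LinearMap.ker_eq_bot, ← hI_eq, hbot, Submodule.restrictScalars_bot]
  simpa using LinearMap.finrank_le_finrank_of_injective hinj

theorem exists_isUnit_mem_ker [Infinite K] [FiniteDimensional K A]
    (hT : (mulForm T).Nondegenerate) (hA : 1 < Module.finrank K A) :
    ∃ g ∈ LinearMap.ker T, IsUnit g := by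
  by_contra! hnonunit
  have : IsArtinianRing A := .of_finite K A
  let kerInf (M : MaximalSpectrum A) : Submodule K (LinearMap.ker T) :=
    (M.asIdeal.restrictScalars K).comap (LinearMap.ker T).subtype
  have hcover : ⋃ M, (kerInf M : Set (LinearMap.ker T)) = Set.univ := by
    refine Set.eq_univ_iff_forall.2 fun g => Set.mem_iUnion.2 ?_
    obtain ⟨M, hM, hgM⟩ := exists_max_ideal_of_mem_nonunits (hnonunit g g.2)
    exact ⟨⟨M, hM⟩, hgM⟩
  obtain ⟨M, hM⟩ := Subspace.exists_eq_top_of_iUnion_eq_univ hcover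
  exact hA.not_ge (finrank_le_one_of_ker_le_ideal hT M.isMaximal.ne_top
    (Submodule.comap_subtype_eq_top.1 hM))

theorem exists_mem_ker_mul_ne_zero (hT : (mulForm T).Nondegenerate)
    (hA : 1 < Module.finrank K A) {f : A} (hf : f ≠ 0) :
    ∃ h ∈ LinearMap.ker T, f * h ≠ 0 := by
  by_contra! hker
  refine hA.not_ge (finrank_le_one_of_ker_le_ideal hT (I := LinearMap.ker (LinearMap.mulLeft A f))
    ?_ fun h hh => hker h hh)
  rw [Ideal.ne_top_iff_one]
  simpa using hf

theorem eq_zero_of_forall_mem_ker_mul_mem_one [FiniteDimensional K A]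
    (hT : (mulForm T).Nondegenerate) (hA : 2 < Module.finrank K A) {f : A}
    (hf : ∀ h ∈ LinearMap.ker T, f * h ∈ (1 : Submodule K A)) : f = 0 := by
  by_contra hf0
  obtain ⟨g, hg, hfg⟩ := exists_mem_ker_mul_ne_zero hT (by lia) hf0
  obtain ⟨c, hc⟩ := Submodule.mem_one.1 (hf g hg)
  have hc0 : c ≠ 0 := by
    rintro rfl
    exact hfg (by rw [← hc, map_zero])
  have hline : LinearMap.ker T ≤ K ∙ g := fun h hh => by
    obtain ⟨d, hd⟩ := Submodule.mem_one.1 (hf h hh)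
    have hcd : c • h = d • g := by
      rw [Algebra.smul_def, Algebra.smul_def, hc, hd]
      ring
    exact Submodule.mem_span_singleton.2 ⟨c⁻¹ * d, by rw [mul_smul, ← hcd, inv_smul_smul₀ hc0]⟩
  have hker : Module.finrank K (LinearMap.ker T) ≤ 1 :=
    (Submodule.finrank_mono hline).trans (finrank_span_singleton_le_one g)
  have hrange : Module.finrank K (LinearMap.range T) ≤ 1 := by
    simpa using Submodule.finrank_le (LinearMap.range T)
  have := LinearMap.finrank_range_add_finrank_ker T
  lia

end Field

namespace ZeroDimScheme

variable {K : Type} [Field K] {n : ℕ} (S : ZeroDimScheme K n)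

theorem V_zero : S.V 0 = 1 := by
  rw [V, MvPolynomial.homogeneousSubmodule_zero, Submodule.map_one]

theorem V_mono : Monotone S.V := monotone_nat_of_le_succ <| by
  rintro i _ ⟨F, hF, rfl⟩
  refine ⟨F * MvPolynomial.X 0,
    MvPolynomial.IsHomogeneous.mul hF (MvPolynomial.isHomogeneous_X K 0), ?_⟩
  simp [S.germ_X0]

theorem one_mem_V (i : ℕ) : (1 : S.Gamma) ∈ S.V i :=
  S.V_mono (Nat.zero_le i) (Submodule.one_le.1 S.V_zero.ge)

variable {S}

theorem HF_eq_degX_iff {i : ℕ} : S.HF i = S.degX ↔ S.V i = ⊤ :=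
  ⟨Submodule.eq_top_of_finrank_eq, fun h => by rw [HF, degX, h, finrank_top]⟩

theorem V_eq_top_iff {i : ℕ} : S.V i = ⊤ ↔ S.rX ≤ i := by
  have hne : {r : ℕ | ∀ i, r ≤ i → S.HF i = S.degX}.Nonempty :=
    S.eventually_surj.imp fun _ hN i hi => HF_eq_degX_iff.2 (hN i hi)
  refine ⟨fun htop => Nat.sInf_le fun k hk => ?_, fun hi => ?_⟩
  · exact HF_eq_degX_iff.2 (top_le_iff.1 (htop ▸ S.V_mono hk))
  · exact HF_eq_degX_iff.1 (Nat.sInf_mem hne i hi)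

theorem mem_V_of_rX_le {i : ℕ} (hi : S.rX ≤ i) (x : S.Gamma) : x ∈ S.V i :=
  V_eq_top_iff.2 hi ▸ Submodule.mem_top

theorem Vz_natCast (i : ℕ) : S.Vz i = S.V i := by simp [Vz]

variable (S) in
theorem Vz_mono : Monotone S.Vz := by
  intro i k hik
  unfold Vz
  split_ifs with hi hk
  · exact S.V_mono (Int.toNat_le_toNat hik)
  · lia
  · exact bot_le
  · exact bot_le

theorem Vz_eq_top {i : ℤ} (hi : S.rX ≤ i) : S.Vz i = ⊤ :=
  top_le_iff.1 <| by simpa [Vz_natCast, V_eq_top_iff.2 le_rfl] using S.Vz_mono hi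

theorem one_lt_degX (hr : 0 < S.rX) : 1 < S.degX := by
  have : Nontrivial S.Gamma := ⟨1, 0, fun h => one_ne_zero (congrFun h ⟨0, S.spos⟩)⟩
  have hlt := Submodule.finrank_lt (V_eq_top_iff.not.2 hr.not_ge)
  rwa [V_zero, Submodule.one_eq_span, finrank_span_singleton one_ne_zero] at hlt

variable {τ : ∀ j, (S.pt j).carrier →ₗ[K] K}

theorem Ttot_mul_single (x : S.Gamma) (j : Fin S.s) (b : (S.pt j).carrier) :
    S.Ttot τ (x * Pi.single j b) = τ j (x j * b) := by
  simp only [Ttot, LinearMap.sum_apply, LinearMap.comp_apply, LinearMap.proj_apply, Pi.mul_apply]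
  rw [Finset.sum_eq_single j (fun k _ hk => by simp [Pi.single_eq_of_ne hk]) (by simp),
    Pi.single_eq_same]

theorem IsTraceFamily.nondegenerate (hτ : S.IsTraceFamily τ) :
    (mulForm (S.Ttot τ)).Nondegenerate := by
  refine mulForm_nondegenerate_iff.2 fun x hx => funext fun j => ?_
  refine (hτ j).1 (LinearMap.ext fun b => ?_)
  simpa [Ttot_mul_single, mul_comm] using hx (Pi.single j b)

theorem mem_Cmod_iff {k : ℤ} {g : S.Gamma} :
    g ∈ S.Cmod τ k ↔ ∀ i : ℕ, k + i < 0 → ∀ x ∈ S.V i, S.Ttot τ (g * x) = 0 := by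
  simp [Cmod, Submodule.mem_iInf]

theorem mem_delta_iff {i : ℤ} {f : S.Gamma} :
    f ∈ S.delta τ i ↔ ∀ k, ∀ g ∈ S.Cmod τ k, f * g ∈ S.Vz (i + k) := by
  simp [delta, Submodule.mem_iInf]

theorem Cmod_neg_succ (m : ℕ) :
    S.Cmod τ (-(m + 1 : ℕ)) = (mulForm (S.Ttot τ)).orthogonal (S.V m) := by
  ext g
  rw [mem_Cmod_iff, mem_orthogonal_mulForm_iff]
  exact ⟨fun h x hx => h m (by lia) x hx, fun h i hi x hx => h x (S.V_mono (by lia) hx)⟩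

theorem Cmod_neg_one : S.Cmod τ (-1) = LinearMap.ker (S.Ttot τ) := by
  simpa [V_zero, orthogonal_mulForm_one] using S.Cmod_neg_succ (τ := τ) 0

theorem Cmod_eq_bot (hτ : S.IsTraceFamily τ) {k : ℤ} (hk : k + S.rX < 0) : S.Cmod τ k = ⊥ :=
  (Submodule.eq_bot_iff _).2 fun g hg => hτ.nondegenerate.1 g fun y =>
    mem_Cmod_iff.1 hg S.rX hk y (mem_V_of_rX_le le_rfl y)

theorem delta_eq_top (hτ : S.IsTraceFamily τ) {i : ℤ} (hi : 2 * (S.rX : ℤ) ≤ i) :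
    S.delta τ i = ⊤ := by
  refine (Submodule.eq_top_iff').2 fun f => mem_delta_iff.2 fun k g hg => ?_
  obtain hk | hk := lt_or_ge (k + S.rX) 0
  · have hg0 : g = 0 := by simpa [Cmod_eq_bot hτ hk] using hg
    simp [hg0]
  · simp [Vz_eq_top (show (S.rX : ℤ) ≤ i + k by lia)]

theorem level_of_rX_le_one (hr : S.rX ≤ 1) : S.Level := by
  intro i hi x hx hsocle
  obtain rfl : i = 0 := by lia
  obtain ⟨c, rfl⟩ := Submodule.mem_one.1 (S.V_zero ▸ hx)
  suffices hc : c = 0 by simp [hc]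
  by_contra hc
  refine hi.not_ge (V_eq_top_iff.1 ((Submodule.eq_top_iff').2 fun y => ?_))
  have hcy := hsocle 1 le_rfl y (mem_V_of_rX_le hr y)
  rwa [Nat.cast_one, add_sub_cancel_right, Vz_natCast, ← Algebra.smul_def,
    Submodule.smul_mem_iff _ hc] at hcy

theorem almostGorenstein_of_isUnit (hτ : S.IsTraceFamily τ) (hr : S.rX ≤ 1) {g : S.Gamma}
    (hg : g ∈ S.Cmod τ (-S.rX)) (hunit : IsUnit g) : S.AlmostGorenstein τ := by
  refine ⟨g, hg, fun _ _ _ => hunit.mul_left_eq_zero.1, fun a ha x _ k h hh => ?_⟩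
  obtain hk | hk := lt_or_ge (k + S.rX) 0
  · have hh0 : h = 0 := by simpa [Cmod_eq_bot hτ hk] using hh
    simp [hh0]
  · rw [Vz_eq_top (by lia)]
    exact ⟨x * h * Ring.inverse g, trivial, by simp [mul_assoc, Ring.inverse_mul_cancel g hunit]⟩

theorem almostGorenstein_of_rX_eq_one [Infinite K] (hτ : S.IsTraceFamily τ) (hr : S.rX = 1) :
    S.AlmostGorenstein τ := by
  obtain ⟨g, hg, hunit⟩ := exists_isUnit_mem_ker hτ.nondegenerate (one_lt_degX (by lia))
  refine almostGorenstein_of_isUnit hτ hr.le ?_ hunit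
  rwa [hr, Nat.cast_one, Cmod_neg_one]

theorem minimalDedekind_of_rX_eq_one (hτ : S.IsTraceFamily τ) (hr : S.rX = 1)
    (hdeg : 2 < S.degX) : S.MinimalDedekind τ := by
  intro i
  split_ifs with hi
  · exact delta_eq_top hτ hi
  refine (Submodule.eq_bot_iff _).2 fun f hf =>
    eq_zero_of_forall_mem_ker_mul_mem_one hτ.nondegenerate hdeg fun h hh => ?_
  rw [← V_zero, ← Vz_natCast]
  exact S.Vz_mono (by lia) (mem_delta_iff.1 hf (-1) h (Cmod_neg_one.ge hh))

theorem Level.mem_one_of_forall_mul_mem_V (hL : S.Level) (hr : 1 < S.rX) {x : S.Gamma}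
    (hx : ∀ a, 1 ≤ a → ∀ y ∈ S.V a, x * y ∈ S.V a) : x ∈ (1 : Submodule K S.Gamma) := by
  have hx1 : x ∈ S.V 1 := by simpa using hx 1 le_rfl 1 (S.one_mem_V 1)
  have hx0 := hL 1 hr x hx1 fun a ha y hy => by
    rw [Nat.cast_one, add_sub_cancel_left, Vz_natCast]
    exact hx a ha y hy
  rwa [Nat.cast_one, sub_self, ← Nat.cast_zero, Vz_natCast, V_zero] at hx0

theorem Level.exists_Cmod_le_span_singleton (hL : S.Level) (hr : 1 < S.rX)
    (hAG : S.AlmostGorenstein τ) : ∃ g, S.Cmod τ (-S.rX) ≤ K ∙ g := by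
  obtain ⟨g, -, hinj, hmul⟩ := hAG
  have hcancel {x y : S.Gamma} (hxy : x * g = y * g) : x = y :=
    sub_eq_zero.1 (hinj S.rX (x - y) (mem_V_of_rX_le le_rfl _) (by rw [sub_mul, hxy, sub_self]))
  refine ⟨g, fun h hh => ?_⟩
  have hlift (a : ℕ) (ha : 1 ≤ a) (y : S.Gamma) (hy : y ∈ S.V a) : ∃ z ∈ S.V a, z * g = y * h := by
    simpa [Vz_natCast] using hmul a ha y hy _ h hh
  obtain ⟨x, -, hxg⟩ := hlift 1 le_rfl 1 (S.one_mem_V 1)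
  rw [one_mul] at hxg
  have hx : x ∈ (1 : Submodule K S.Gamma) := hL.mem_one_of_forall_mul_mem_V hr fun a ha y hy => by
    obtain ⟨z, hz, hzg⟩ := hlift a ha y hy
    have hxy : x * y = z := hcancel (by rw [hzg, ← hxg]; ring)
    rwa [hxy]
  obtain ⟨c, rfl⟩ := Submodule.mem_one.1 hx
  exact Submodule.mem_span_singleton.2 ⟨c, by rw [Algebra.smul_def, hxg]⟩

theorem Level.not_almostGorenstein (hL : S.Level) (hr : 1 < S.rX)
    (hΔ : 1 < S.degX - S.HF (S.rX - 1)) : ¬ S.AlmostGorenstein τ := by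
  intro hAG
  obtain ⟨g, hg⟩ := hL.exists_Cmod_le_span_singleton hr hAG
  have hdual := finrank_le_finrank_add_finrank_orthogonal_mulForm (T := S.Ttot τ) (S.V (S.rX - 1))
  rw [← Cmod_neg_succ, Nat.sub_add_cancel hr.le] at hdual
  have hline := (Submodule.finrank_mono hg).trans (finrank_span_singleton_le_one g)
  unfold degX HF at hΔ
  lia

end ZeroDimScheme

/-- Proposition 6.11.  Let `K` be an infinite field and
`𝕏 ⊆ ℙⁿ_K` a 0-dimensional locally Gorenstein scheme (with trace family `τ`).  Then:
(a) if `r_𝕏 = 1` then `𝕏` is an almost Gorenstein level scheme;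
(b) if `r_𝕏 = 1` and `deg 𝕏 > 2` then `𝕏` has minimal Dedekind different;
(c) if `𝕏` is level and `min {Δ_𝕏, r_𝕏} ≥ 2`, then `𝕏` is not an almost
Gorenstein scheme. -/
theorem dedekind_CB_stmt18 (K : Type) [Field K] [Infinite K] (n : ℕ)
    (S : ZeroDimScheme K n)
    (τ : ∀ j, (S.pt j).carrier →ₗ[K] K) (hτ : S.IsTraceFamily τ) :
    (S.rX = 1 → S.AlmostGorenstein τ ∧ S.Level) ∧
    (S.rX = 1 → 2 < S.degX → S.MinimalDedekind τ) ∧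
    (S.Level → 2 ≤ min (S.degX - S.HF (S.rX - 1)) S.rX →
      ¬ S.AlmostGorenstein τ) := by
  refine ⟨fun hr => ⟨?_, ?_⟩, fun hr hdeg => ?_, fun hL hmin => ?_⟩
  · exact ZeroDimScheme.almostGorenstein_of_rX_eq_one hτ hr
  · exact ZeroDimScheme.level_of_rX_le_one hr.le
  · exact ZeroDimScheme.minimalDedekind_of_rX_eq_one hτ hr hdeg
  · obtain ⟨hΔ, hr⟩ := le_min_iff.1 hmin
    exact hL.not_almostGorenstein hr hΔ
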